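/- arXiv:2112.13978 — 4 statements merged into one kernel-verified Lean document; each statement's English description precedes it below -/
import Mathlib

section
/- Let n ≥ 2 and let f be a Schwartz function on ℝⁿ. Then for every x ∈ ℝⁿ, the normal operator of the X-ray transform satisfies X'Xf(x) = ∫_{S^{n-1}} ∫_ℝ f(x+sθ) ds dθ = 2 ∫_{ℝⁿ} f(y)/|x-y|^{n-1} dy. -/
open MeasureTheory Metric Real

/-- The `n`-dimensional Euclidean space. -/
abbrev Euc (n : ℕ) := EuclideanSpace ℝ (Fin n)

/-- The standard surface measure on the unit sphere `S^{n-1} ⊂ ℝⁿ`. -/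
noncomputable def sphereMeasure (n : ℕ) : Measure (sphere (0 : Euc n) 1) :=
  (volume : Measure (Euc n)).toSphere

/-- The surface measure `|S^{n-1}|` of the unit sphere in `ℝⁿ`. -/
noncomputable def sphereVol (n : ℕ) : ℝ := (sphereMeasure n Set.univ).toReal

/-- The X-ray transform `Xf(x,θ) = ∫_ℝ f(x+sθ) ds`. -/
noncomputable def Xray {n : ℕ} (f : Euc n → ℝ) (x θ : Euc n) : ℝ :=
  ∫ s : ℝ, f (x + s • θ)

/-- The normal operator `X'Xf(x) = ∫_{S^{n-1}} Xf(x,θ) dθ`. -/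
noncomputable def normalOp {n : ℕ} (f : Euc n → ℝ) (x : Euc n) : ℝ :=
  ∫ θ : sphere (0 : Euc n) 1, Xray f x (θ : Euc n) ∂(sphereMeasure n)

/-- The single pixel X-ray transform `Kf(x) = ∫_{S^{n-1}} e^{-Xf(x,θ)} dθ`. -/
noncomputable def singlePixel {n : ℕ} (f : Euc n → ℝ) (x : Euc n) : ℝ :=
  ∫ θ : sphere (0 : Euc n) 1, Real.exp (-(Xray f x (θ : Euc n))) ∂(sphereMeasure n)

/-- The Fourier transform `𝓕f(ξ) = ∫ e^{-i x·ξ} f(x) dx`. -/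
noncomputable def FT {n : ℕ} (f : Euc n → ℝ) (ξ : Euc n) : ℂ :=
  ∫ x : Euc n, Complex.exp (-(Complex.I * ((inner ℝ x ξ : ℝ) : ℂ))) * (f x : ℂ)

/-- The inverse Fourier transform `𝓕⁻¹g(x) = (2π)^{-n} ∫ e^{i x·ξ} g(ξ) dξ`. -/
noncomputable def invFT {n : ℕ} (g : Euc n → ℂ) (x : Euc n) : ℂ :=
  ((((2 * π) ^ n)⁻¹ : ℝ) : ℂ) * ∫ ξ : Euc n, Complex.exp (Complex.I * ((inner ℝ x ξ : ℝ) : ℂ)) * g ξ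

/-- The `L²(ℝⁿ)` norm `(∫ |f|²)^{1/2}`. -/
noncomputable def L2norm {n : ℕ} (f : Euc n → ℝ) : ℝ :=
  (∫ x : Euc n, f x ^ 2) ^ ((1 : ℝ) / 2)

/-- The `H¹(U)` norm `(∫_U |u|²)^{1/2} + (∫_U |∇u|²)^{1/2}`. -/
noncomputable def H1norm {n : ℕ} (U : Set (Euc n)) (u : Euc n → ℝ) : ℝ :=
  (∫ x in U, u x ^ 2) ^ ((1 : ℝ) / 2) + (∫ x in U, ‖fderiv ℝ u x‖ ^ 2) ^ ((1 : ℝ) / 2)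

open Module
open scoped ENNReal NNReal

/-!
Polar coordinates `z = rθ` have Jacobian `r ^ (n - 1)`, which the density `‖z‖ ^ (1 - n)` cancels:
the measure `‖z‖ ^ (1 - n) dz` is the image of `dθ dr` on `S^{n-1} × (0, ∞)`. It is even, so letting
the radius range over all of `ℝ` doubles it: `(θ, s) ↦ sθ` carries `dθ ds` to
`2 ‖z‖ ^ (1 - n) dz`. Applied to `z ↦ f (x + z)`, the Fubini theorem and the substitution
`y = x + z` give the formula whenever its right-hand side converges absolutely.
-/

theorem lintegral_eq_setLIntegral_Ioi_add_comp_neg (μ : Measure ℝ) [μ.IsNegInvariant]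
    [NullSingletonClass μ] (f : ℝ → ℝ≥0∞) :
    ∫⁻ s, f s ∂μ = (∫⁻ r in Set.Ioi 0, f r ∂μ) + ∫⁻ r in Set.Ioi 0, f (-r) ∂μ := by
  have hneg : ∫⁻ r in Set.Ioi 0, f (-r) ∂μ = ∫⁻ s in Set.Iic 0, f s ∂μ := by
    rw [(Measure.measurePreserving_neg μ).setLIntegral_comp_emb
        (MeasurableEquiv.neg ℝ).measurableEmbedding,
      Set.image_neg_eq_neg, Set.neg_Ioi, neg_zero, setLIntegral_congr Iio_ae_eq_Iic]
  rw [hneg, ← Set.compl_Ioi, lintegral_add_compl f measurableSet_Ioi]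

section RieszMeasure

variable {E F : Type*} [NormedAddCommGroup E] [NormedSpace ℝ E] [MeasurableSpace E]
  [NormedAddCommGroup F] [NormedSpace ℝ F]

/-- The measure `‖z‖ ^ (1 - dim E) dμ(z)`, whose convolution with a function is, up to a constant,
the Riesz potential of order one. The density takes values in `ℝ≥0`, so that for `dim E ≥ 2` it is
`0` rather than `∞` at the origin. -/
noncomputable def rieszMeasure (μ : Measure E) : Measure E :=
  μ.withDensity fun z ↦ ((‖z‖₊ ^ (finrank ℝ E - 1))⁻¹ : ℝ≥0)

variable [BorelSpace E] {μ : Measure E}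

theorem lintegral_rieszMeasure {f : E → ℝ≥0∞} (hf : Measurable f) :
    ∫⁻ z, f z ∂rieszMeasure μ = ∫⁻ z, ((‖z‖₊ ^ (finrank ℝ E - 1))⁻¹ : ℝ≥0) * f z ∂μ :=
  lintegral_withDensity_eq_lintegral_mul μ (by fun_prop) hf

theorem integrable_rieszMeasure_iff {g : E → F} :
    Integrable g (rieszMeasure μ) ↔
      Integrable (fun z ↦ (‖z‖ ^ (finrank ℝ E - 1))⁻¹ • g z) μ :=
  integrable_withDensity_iff_integrable_smul (by fun_prop)

theorem integral_rieszMeasure (g : E → F) :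
    ∫ z, g z ∂rieszMeasure μ = ∫ z, (‖z‖ ^ (finrank ℝ E - 1))⁻¹ • g z ∂μ :=
  integral_withDensity_eq_integral_smul (by fun_prop) g

theorem integrable_comp_add_left_rieszMeasure_iff [μ.IsAddLeftInvariant] {g : E → F} (x : E) :
    Integrable (fun z ↦ g (x + z)) (rieszMeasure μ) ↔
      Integrable (fun y ↦ (‖x - y‖ ^ (finrank ℝ E - 1))⁻¹ • g y) μ := by
  rw [integrable_rieszMeasure_iff,
    ← (measurePreserving_add_left μ x).integrable_comp_emb (measurableEmbedding_addLeft x)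
      (g := fun y ↦ (‖x - y‖ ^ (finrank ℝ E - 1))⁻¹ • g y)]
  simp only [Function.comp_def, sub_add_cancel_left, norm_neg]

theorem integral_comp_add_left_rieszMeasure [μ.IsAddLeftInvariant] (g : E → F) (x : E) :
    ∫ z, g (x + z) ∂rieszMeasure μ =
      ∫ y, (‖x - y‖ ^ (finrank ℝ E - 1))⁻¹ • g y ∂μ := by
  rw [integral_rieszMeasure,
    ← integral_add_left_eq_self (fun y ↦ (‖x - y‖ ^ (finrank ℝ E - 1))⁻¹ • g y) x]
  simp only [sub_add_cancel_left, norm_neg]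

instance rieszMeasure.instIsNegInvariant [μ.IsNegInvariant] :
    (rieszMeasure μ).IsNegInvariant := by
  refine ⟨Measure.ext_of_lintegral _ fun f hf ↦ ?_⟩
  rw [Measure.neg, lintegral_map hf measurable_neg, lintegral_rieszMeasure (by fun_prop),
    lintegral_rieszMeasure hf]
  simpa only [nnnorm_neg] using (Measure.measurePreserving_neg μ).lintegral_comp
    (f := fun z ↦ ((‖z‖₊ ^ (finrank ℝ E - 1))⁻¹ : ℝ≥0) * f z) (by fun_prop)

end RieszMeasure

section Polar

variable {E F : Type*} [NormedAddCommGroup E] [NormedSpace ℝ E] [FiniteDimensional ℝ E]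
  [Nontrivial E] [MeasurableSpace E] [BorelSpace E] (μ : Measure E) [μ.IsAddHaarMeasure]

theorem measurePreserving_smul_sphere_Ioi :
    MeasurePreserving (fun p : sphere (0 : E) 1 × Set.Ioi (0 : ℝ) ↦ (p.2 : ℝ) • (p.1 : E))
      (μ.toSphere.prod (.volumeIoiPow (finrank ℝ E - 1))) μ := by
  have hval : MeasurePreserving ((↑) : ({0}ᶜ : Set E) → E) (μ.comap (↑)) μ := by
    simpa only [restrict_compl_singleton] using
      measurePreserving_subtype_coe (μa := μ) (measurableSet_singleton (0 : E)).compl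
  exact hval.comp <| MeasurePreserving.symm (homeomorphUnitSphereProd E).toMeasurableEquiv
    μ.measurePreserving_homeomorphUnitSphereProd

theorem lintegral_eq_lintegral_sphere_lintegral_Ioi {f : E → ℝ≥0∞} (hf : Measurable f) :
    ∫⁻ z, f z ∂μ = ∫⁻ θ : sphere (0 : E) 1, (∫⁻ r in Set.Ioi (0 : ℝ),
      ENNReal.ofReal (r ^ (finrank ℝ E - 1)) * f (r • (θ : E))) ∂μ.toSphere := by
  rw [← (measurePreserving_smul_sphere_Ioi μ).lintegral_comp hf, lintegral_prod _ (by fun_prop)]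
  refine lintegral_congr fun θ ↦ ?_
  rw [Measure.volumeIoiPow, lintegral_withDensity_eq_lintegral_mul _ (by fun_prop) (by fun_prop)]
  exact lintegral_subtype_comap measurableSet_Ioi
    fun r : ℝ ↦ ENNReal.ofReal (r ^ (finrank ℝ E - 1)) * f (r • (θ : E))

theorem lintegral_sphere_lintegral_ray {f : E → ℝ≥0∞} (hf : Measurable f) :
    ∫⁻ θ : sphere (0 : E) 1, (∫⁻ r in Set.Ioi (0 : ℝ), f (r • (θ : E))) ∂μ.toSphere =
      ∫⁻ z, f z ∂rieszMeasure μ := by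
  rw [lintegral_rieszMeasure hf, lintegral_eq_lintegral_sphere_lintegral_Ioi μ (by fun_prop)]
  refine lintegral_congr fun θ ↦ setLIntegral_congr_fun measurableSet_Ioi fun r (hr : 0 < r) ↦ ?_
  have hnorm : ‖r • (θ : E)‖₊ = r.toNNReal := by
    rw [← NNReal.coe_inj, coe_nnnorm, norm_smul, norm_eq_of_mem_sphere, mul_one,
      norm_of_nonneg hr.le, coe_toNNReal r hr.le]
  have hcancel : ENNReal.ofReal (r ^ (finrank ℝ E - 1)) *
      ((r.toNNReal ^ (finrank ℝ E - 1))⁻¹ : ℝ≥0) = 1 := by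
    rw [ENNReal.ofReal, toNNReal_pow hr.le, ← ENNReal.coe_mul,
      mul_inv_cancel₀ (pow_ne_zero _ (toNNReal_pos.2 hr).ne'), ENNReal.coe_one]
  rw [hnorm, ← mul_assoc, hcancel, one_mul]

theorem lintegral_sphere_lintegral_line {f : E → ℝ≥0∞} (hf : Measurable f) :
    ∫⁻ θ : sphere (0 : E) 1, (∫⁻ s : ℝ, f (s • (θ : E))) ∂μ.toSphere =
      2 * ∫⁻ z, f z ∂rieszMeasure μ := by
  have hf_neg : Measurable fun z ↦ f (-z) := by fun_prop
  have hmeas : Measurable fun θ : sphere (0 : E) 1 ↦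
      ∫⁻ r in Set.Ioi (0 : ℝ), f (r • (θ : E)) :=
    Measurable.lintegral_prod_right (by fun_prop)
  simp only [lintegral_eq_setLIntegral_Ioi_add_comp_neg volume, neg_smul]
  rw [lintegral_add_left hmeas, lintegral_sphere_lintegral_ray μ hf,
    lintegral_sphere_lintegral_ray μ hf_neg,
    (Measure.measurePreserving_neg (rieszMeasure μ)).lintegral_comp hf, two_mul]

theorem measurePreserving_smul_sphere_line :
    MeasurePreserving (fun p : sphere (0 : E) 1 × ℝ ↦ p.2 • (p.1 : E))
      (μ.toSphere.prod volume) ((2 : ℝ≥0∞) • rieszMeasure μ) := by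
  refine ⟨by fun_prop, Measure.ext_of_lintegral _ fun f hf ↦ ?_⟩
  rw [lintegral_map hf (by fun_prop), lintegral_prod _ (by fun_prop),
    lintegral_sphere_lintegral_line μ hf, lintegral_smul_measure, smul_eq_mul]

variable {μ} [NormedAddCommGroup F] [NormedSpace ℝ F]

theorem integral_sphere_integral_line {g : E → F} (hg : Integrable g (rieszMeasure μ)) :
    ∫ θ : sphere (0 : E) 1, (∫ s : ℝ, g (s • (θ : E))) ∂μ.toSphere =
      (2 : ℝ) • ∫ z, g z ∂rieszMeasure μ := by
  have hline := measurePreserving_smul_sphere_line μ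
  have hg_two : Integrable g ((2 : ℝ≥0∞) • rieszMeasure μ) :=
    hg.smul_measure ENNReal.ofNat_ne_top
  calc
    _ = ∫ p : sphere (0 : E) 1 × ℝ, g (p.2 • (p.1 : E)) ∂μ.toSphere.prod volume :=
      (integral_prod _ (hline.integrable_comp_of_integrable hg_two)).symm
    _ = ∫ z, g z ∂((2 : ℝ≥0∞) • rieszMeasure μ) := by
      rw [← hline.map_eq] at hg_two ⊢
      exact (integral_map hline.aemeasurable hg_two.aestronglyMeasurable).symm
    _ = (2 : ℝ) • ∫ z, g z ∂rieszMeasure μ := by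
      rw [integral_smul_measure, ENNReal.toReal_ofNat]

theorem integrable_comp_norm_rieszMeasure_iff {φ : ℝ → F} :
    Integrable (fun z ↦ φ ‖z‖) (rieszMeasure μ) ↔ IntegrableOn φ (Set.Ioi 0) := by
  rw [integrable_rieszMeasure_iff,
    integrable_fun_norm_addHaar μ (f := fun r ↦ (r ^ (finrank ℝ E - 1))⁻¹ • φ r)]
  refine integrableOn_congr_fun (fun r (hr : 0 < r) ↦ ?_) measurableSet_Ioi
  exact smul_inv_smul₀ (pow_ne_zero _ hr.ne') (φ r)

end Polar

section Schwartz

variable {E F : Type*} [NormedAddCommGroup E] [NormedSpace ℝ E] [NormedAddCommGroup F]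
  [NormedSpace ℝ F]

theorem exists_norm_schwartzMap_le_mul_inv_one_add_norm_sq (g : SchwartzMap E F) :
    ∃ C : ℝ, ∀ z, ‖g z‖ ≤ C * (1 + ‖z‖ ^ 2)⁻¹ := by
  obtain ⟨A, -, hA⟩ := g.decay 0 0
  obtain ⟨B, -, hB⟩ := g.decay 2 0
  simp only [norm_iteratedFDeriv_zero, pow_zero, one_mul] at hA hB
  refine ⟨A + B, fun z ↦ ?_⟩
  rw [← div_eq_mul_inv, le_div_iff₀' (by positivity), add_mul, one_mul]
  exact add_le_add (hA z) (hB z)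

variable [FiniteDimensional ℝ E] [Nontrivial E] [MeasurableSpace E] [BorelSpace E]
  {μ : Measure E} [μ.IsAddHaarMeasure]

theorem integrable_schwartzMap_rieszMeasure (g : SchwartzMap E F) :
    Integrable g (rieszMeasure μ) := by
  obtain ⟨C, hC⟩ := exists_norm_schwartzMap_le_mul_inv_one_add_norm_sq g
  have hbound : Integrable (fun z ↦ C * (1 + ‖z‖ ^ 2)⁻¹) (rieszMeasure μ) :=
    integrable_comp_norm_rieszMeasure_iff (φ := fun r ↦ C * (1 + r ^ 2)⁻¹) |>.2
      (integrable_inv_one_add_sq.const_mul C).integrableOn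
  exact hbound.mono' g.continuous.aestronglyMeasurable (.of_forall hC)

theorem integrable_inv_norm_sub_pow_smul_schwartzMap (g : SchwartzMap E F) (x : E) :
    Integrable (fun y ↦ (‖x - y‖ ^ (finrank ℝ E - 1))⁻¹ • g y) μ := by
  rw [← integrable_comp_add_left_rieszMeasure_iff]
  refine (integrable_schwartzMap_rieszMeasure (g.compSubConstCLM ℝ (-x))).congr
    (.of_forall fun z ↦ ?_)
  rw [SchwartzMap.compSubConstCLM_apply, sub_neg_eq_add, add_comm]

end Schwartz

theorem normalOp_eq_double_integral_and_kernel_general (n : ℕ) [NeZero n] (f : Euc n → ℝ)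
    (x : Euc n) (hf : Integrable fun y ↦ f y / ‖x - y‖ ^ (n - 1)) :
    normalOp f x =
      (∫ θ : sphere (0 : Euc n) 1, (∫ s : ℝ, f (x + s • (θ : Euc n))) ∂(sphereMeasure n)) ∧
    normalOp f x = 2 * ∫ y : Euc n, f y / ‖x - y‖ ^ (n - 1) := by
  have hriesz : Integrable (fun z ↦ f (x + z)) (rieszMeasure volume) := by
    simpa only [integrable_comp_add_left_rieszMeasure_iff, finrank_euclideanSpace_fin, smul_eq_mul,
      div_eq_inv_mul] using hf
  refine ⟨rfl, (integral_sphere_integral_line hriesz).trans ?_⟩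
  simp only [integral_comp_add_left_rieszMeasure, finrank_euclideanSpace_fin, smul_eq_mul,
    div_eq_inv_mul]

/-- For `n ≥ 2` and a Schwartz function `f` on `ℝⁿ`, the normal operator of the
X-ray transform satisfies `X'Xf(x) = ∫_{S^{n-1}} ∫_ℝ f(x+sθ) ds dθ = 2 ∫ f(y)/|x-y|^{n-1} dy`. -/
theorem normalOp_eq_double_integral_and_kernel (n : ℕ) (hn : 2 ≤ n)
    (f : SchwartzMap (Euc n) ℝ) (x : Euc n) :
    normalOp (fun y => f y) x =
      (∫ θ : sphere (0 : Euc n) 1, (∫ s : ℝ, f (x + s • (θ : Euc n))) ∂(sphereMeasure n)) ∧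
    normalOp (fun y => f y) x = 2 * ∫ y : Euc n, f y / ‖x - y‖ ^ (n - 1) := by
  have : NeZero n := ⟨by lia⟩
  refine normalOp_eq_double_integral_and_kernel_general n f x ?_
  simpa only [finrank_euclideanSpace_fin, smul_eq_mul, div_eq_inv_mul] using
    integrable_inv_norm_sub_pow_smul_schwartzMap (μ := volume) f x
end

section
/- Let n ≥ 2 and let f : ℝⁿ → ℝ be continuous and compactly supported. Then for every x ∈ ℝⁿ, the single pixel X-ray transform admits the expansion Kf(x) = |S^{n-1}| − X'Xf(x) + ∫_{S^{n-1}} ( Σ_{m=2}^{∞} ((-1)^m / m!) (Xf(x,θ))^m ) dθ, where the series converges and the integral over S^{n-1} of the series is finite. -/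
open MeasureTheory Metric Real

/-!
Summed over all `m`, the series of `(-1)ᵐ / m! (Xf)ᵐ` is `exp (-Xf)` pointwise, so the part `m ≥ 2`
is the difference of `exp (-Xf)` and two explicit terms, and no interchange of sum and integral is
needed. For integrability it suffices that `Xf(x, ·)` is measurable and bounded on the sphere, and
it is bounded because a line through `x` meets a ball of radius `R` around `x` in a segment of
length `2R`.
-/

section TailOfSeries

variable {α E : Type*} [MeasurableSpace α] {μ : Measure α} [NormedAddCommGroup E]
  {u : ℕ → α → E} {g : α → E}

theorem tsum_nat_add_ae_eq_sub_sum (hsum : ∀ᵐ a ∂μ, HasSum (fun m => u m a) (g a)) (k : ℕ) :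
    (fun a => ∑' m, u (m + k) a) =ᵐ[μ] fun a => g a - ∑ m ∈ Finset.range k, u m a := by
  filter_upwards [hsum] with a ha
  exact ((hasSum_nat_add_iff' k).2 ha).tsum_eq

theorem integrable_tsum_nat_add (hg : Integrable g μ)
    (hsum : ∀ᵐ a ∂μ, HasSum (fun m => u m a) (g a)) {k : ℕ}
    (hu : ∀ m ∈ Finset.range k, Integrable (u m) μ) :
    Integrable (fun a => ∑' m, u (m + k) a) μ :=
  (hg.sub (integrable_finsetSum _ hu)).congr (tsum_nat_add_ae_eq_sub_sum hsum k).symm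

theorem integral_eq_sum_add_integral_tsum_nat_add [NormedSpace ℝ E] (hg : Integrable g μ)
    (hsum : ∀ᵐ a ∂μ, HasSum (fun m => u m a) (g a)) {k : ℕ}
    (hu : ∀ m ∈ Finset.range k, Integrable (u m) μ) :
    ∫ a, g a ∂μ = ∑ m ∈ Finset.range k, ∫ a, u m a ∂μ + ∫ a, ∑' m, u (m + k) a ∂μ := by
  rw [integral_congr_ae (tsum_nat_add_ae_eq_sub_sum hsum k),
    integral_sub hg (integrable_finsetSum _ hu), integral_finsetSum _ hu, add_sub_cancel]

end TailOfSeries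

theorem hasSum_exp_neg (t : ℝ) :
    HasSum (fun m : ℕ => (-1 : ℝ) ^ m / m.factorial * t ^ m) (Real.exp (-t)) := by
  have hterm (m : ℕ) : (-1 : ℝ) ^ m / m.factorial * t ^ m = (-t) ^ m / m.factorial := by
    rw [neg_pow t, div_mul_eq_mul_div]
  simpa only [hterm, Real.exp_eq_exp_ℝ] using NormedSpace.expSeries_div_hasSum_exp (-t)

theorem integrable_comp_of_ae_norm_le {α E F : Type*} [MeasurableSpace α] {μ : Measure α}
    [IsFiniteMeasure μ] [NormedAddCommGroup E] [ProperSpace E] [NormedAddCommGroup F]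
    {φ : E → F} {g : α → E} {C : ℝ} (hφ : Continuous φ) (hg : AEStronglyMeasurable g μ)
    (hC : ∀ᵐ a ∂μ, ‖g a‖ ≤ C) : Integrable (fun a => φ (g a)) μ := by
  obtain ⟨B, hB⟩ :=
    (isCompact_closedBall (0 : E) C).exists_bound_of_continuousOn hφ.continuousOn
  exact .of_bound (hφ.comp_aestronglyMeasurable hg) B
    (hC.mono fun a ha => hB _ (mem_closedBall_zero_iff.2 ha))

section IntegralAlongLine

variable {E F : Type*} [NormedAddCommGroup E] [NormedSpace ℝ E] [NormedAddCommGroup F]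
  [NormedSpace ℝ F] {f : E → F}

theorem stronglyMeasurable_integral_line [MeasurableSpace E] [BorelSpace E]
    [SecondCountableTopology E] (hf : StronglyMeasurable f) :
    StronglyMeasurable fun p : E × E => ∫ s : ℝ, f (p.1 + s • p.2) := by
  have hline : Measurable fun q : (E × E) × ℝ => q.1.1 + q.2 • q.1.2 := by fun_prop
  exact (hf.comp_measurable hline).integral_prod_right'

theorem norm_integral_line_le {C R : ℝ} {x θ : E} (hC : ∀ y, ‖f y‖ ≤ C) (hR : 0 ≤ R)
    (hsupp : Function.support f ⊆ closedBall x R) (hθ : θ ≠ 0) :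
    ‖∫ s : ℝ, f (x + s • θ)‖ ≤ C * (2 * (R / ‖θ‖)) := by
  have hzero : ∀ s ∉ closedBall (0 : ℝ) (R / ‖θ‖), f (x + s • θ) = 0 := by
    intro s hs
    by_contra hne
    have hmem : ‖s‖ * ‖θ‖ ≤ R := by simpa [norm_smul] using hsupp hne
    exact hs (mem_closedBall_zero_iff.2 ((le_div_iff₀ (norm_pos_iff.2 hθ)).2 hmem))
  calc ‖∫ s : ℝ, f (x + s • θ)‖
      = ‖∫ s in closedBall (0 : ℝ) (R / ‖θ‖), f (x + s • θ)‖ := by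
        rw [setIntegral_eq_integral_of_forall_compl_eq_zero hzero]
    _ ≤ C * volume.real (closedBall (0 : ℝ) (R / ‖θ‖)) :=
        norm_setIntegral_le_of_norm_le_const measure_closedBall_lt_top fun s _ => hC _
    _ = C * (2 * (R / ‖θ‖)) := by rw [Real.volume_real_closedBall (by positivity)]

end IntegralAlongLine

instance isFiniteMeasure_sphereMeasure (n : ℕ) : IsFiniteMeasure (sphereMeasure n) :=
  inferInstanceAs (IsFiniteMeasure (volume : Measure (Euc n)).toSphere)

section Xray

variable {n : ℕ} {f : Euc n → ℝ}

theorem measurable_Xray (hf : Measurable f) :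
    Measurable fun p : Euc n × Euc n => Xray f p.1 p.2 :=
  (stronglyMeasurable_integral_line hf.stronglyMeasurable).measurable

theorem exists_forall_sphere_norm_Xray_le (hbdd : Bornology.IsBounded (Set.range f))
    (hsupp : Bornology.IsBounded (Function.support f)) (x : Euc n) :
    ∃ C, ∀ θ : sphere (0 : Euc n) 1, ‖Xray f x θ‖ ≤ C := by
  obtain ⟨C, hC⟩ := isBounded_iff_forall_norm_le.1 hbdd
  rw [Set.forall_mem_range] at hC
  obtain ⟨R, hR, hsuppR⟩ := hsupp.subset_closedBall_lt 0 x
  refine ⟨C * (2 * (R / 1)), fun θ => ?_⟩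
  simpa only [Xray, norm_eq_of_mem_sphere θ] using
    norm_integral_line_le hC hR.le hsuppR (ne_zero_of_mem_unit_sphere θ)

theorem integrable_sphere_comp_Xray {F : Type*} [NormedAddCommGroup F] {φ : ℝ → F}
    (hφ : Continuous φ) (hf : Measurable f) (hbdd : Bornology.IsBounded (Set.range f))
    (hsupp : Bornology.IsBounded (Function.support f)) (x : Euc n) :
    Integrable (fun θ : sphere (0 : Euc n) 1 => φ (Xray f x θ)) (sphereMeasure n) := by
  obtain ⟨C, hC⟩ := exists_forall_sphere_norm_Xray_le hbdd hsupp x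
  have hmeas : Measurable fun θ : sphere (0 : Euc n) 1 => Xray f x θ :=
    (measurable_Xray hf).comp (measurable_const.prodMk measurable_subtype_coe)
  exact integrable_comp_of_ae_norm_le hφ hmeas.aestronglyMeasurable (.of_forall hC)

end Xray

theorem singlePixel_taylor_expansion_general {n : ℕ} {f : Euc n → ℝ} (hf : Measurable f)
    (hbdd : Bornology.IsBounded (Set.range f))
    (hsupp : Bornology.IsBounded (Function.support f)) (x : Euc n) :
    (∀ θ : sphere (0 : Euc n) 1,
      Summable (fun m : ℕ =>
        (-1 : ℝ) ^ (m + 2) / (m + 2).factorial * Xray f x (θ : Euc n) ^ (m + 2))) ∧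
    Integrable (fun θ : sphere (0 : Euc n) 1 =>
        ∑' m : ℕ, (-1 : ℝ) ^ (m + 2) / (m + 2).factorial * Xray f x (θ : Euc n) ^ (m + 2))
      (sphereMeasure n) ∧
    singlePixel f x = sphereVol n - normalOp f x +
      ∫ θ : sphere (0 : Euc n) 1,
        ∑' m : ℕ, (-1 : ℝ) ^ (m + 2) / (m + 2).factorial * Xray f x (θ : Euc n) ^ (m + 2)
        ∂(sphereMeasure n) := by
  have hexp : Integrable (fun θ : sphere (0 : Euc n) 1 => Real.exp (-Xray f x θ))
      (sphereMeasure n) :=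
    integrable_sphere_comp_Xray (φ := fun t => Real.exp (-t)) (by fun_prop) hf hbdd hsupp x
  have hterm (m : ℕ) : Integrable
      (fun θ : sphere (0 : Euc n) 1 => (-1 : ℝ) ^ m / m.factorial * Xray f x θ ^ m)
      (sphereMeasure n) :=
    integrable_sphere_comp_Xray (φ := fun t => (-1) ^ m / m.factorial * t ^ m)
      (by fun_prop) hf hbdd hsupp x
  have hsum (θ : sphere (0 : Euc n) 1) := hasSum_exp_neg (Xray f x θ)
  refine ⟨fun θ => (summable_nat_add_iff 2).2 (hsum θ).summable,
    integrable_tsum_nat_add hexp (.of_forall hsum) fun m _ => hterm m, ?_⟩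
  rw [singlePixel, integral_eq_sum_add_integral_tsum_nat_add hexp (.of_forall hsum) (k := 2)
    fun m _ => hterm m]
  simp [Finset.sum_range_succ, integral_neg, sphereVol, normalOp, Measure.real, sub_eq_add_neg]

/-- For `n ≥ 2` and `f` continuous with compact support,
`Kf(x) = |S^{n-1}| − X'Xf(x) + ∫_{S^{n-1}} Σ_{m=2}^∞ ((-1)^m/m!)(Xf(x,θ))^m dθ`, where the
series converges and its integral over the sphere is finite. -/
theorem singlePixel_taylor_expansion (n : ℕ) (hn : 2 ≤ n) (f : Euc n → ℝ)
    (hf : Continuous f) (hfc : HasCompactSupport f) (x : Euc n) :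
    (∀ θ : sphere (0 : Euc n) 1,
      Summable (fun m : ℕ =>
        (-1 : ℝ) ^ (m + 2) / (m + 2).factorial * Xray f x (θ : Euc n) ^ (m + 2))) ∧
    Integrable (fun θ : sphere (0 : Euc n) 1 =>
        ∑' m : ℕ, (-1 : ℝ) ^ (m + 2) / (m + 2).factorial * Xray f x (θ : Euc n) ^ (m + 2))
      (sphereMeasure n) ∧
    singlePixel f x = sphereVol n - normalOp f x +
      ∫ θ : sphere (0 : Euc n) 1,
        ∑' m : ℕ, (-1 : ℝ) ^ (m + 2) / (m + 2).factorial * Xray f x (θ : Euc n) ^ (m + 2)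
        ∂(sphereMeasure n) := by
  exact singlePixel_taylor_expansion_general hf.measurable (hfc.isCompact_range hf).isBounded
    (hfc.isCompact.isBounded.subset (subset_tsupport f)) x
end

section
/- Let n ≥ 3 and let Ω, Ω₁ ⊂ ℝⁿ be open bounded sets with closure(Ω) ⊂ Ω₁. Then there exists a constant C > 0, depending on n, Ω and Ω₁, such that for every continuously differentiable f : ℝⁿ → ℝ supported in the closure of Ω, one has ‖Kf‖_{H¹(Ω₁)} ≤ C e^{C‖f‖_{C⁰}} (1 + ‖f‖_{H¹(ℝⁿ)}), where ‖f‖_{C⁰} is the supremum norm of f and ‖f‖_{H¹(ℝⁿ)} := (∫_{ℝⁿ}|f|²)^{1/2} + (∫_{ℝⁿ}|∇f|²)^{1/2}. -/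
open MeasureTheory Metric Real

/-!
Let a ball of radius `R` contain both the support of `f` and `Ω₁`. A unit-speed line through a
point of this ball leaves the support of `f` after time `2R`, so there `Kf` agrees with the
transform built from integrals over segments of half-length `L = 2R`. The latter is `C¹` on the
whole space, and `0 < e^{-Xf} ≤ e^{2L‖f‖_∞}` bounds it in `L²(Ω₁)`. Its gradient is dominated
pointwise by `e^{2L‖f‖_∞}` times the integral of the translates `|∇f|(· + sθ)` over the finite
measure space `S^{n-1} × [-L, L]`, and by Jensen's inequality and translation invariance such an
average is bounded on `L²`.
-/

open Set Filter Topology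
open scoped ENNReal

section Integration

variable {α : Type*} [MeasurableSpace α]

lemma lintegral_rpow_le_measure_univ_rpow_mul {ν : Measure α} {p : ℝ} (hp : 1 ≤ p) {h : α → ℝ≥0∞}
    (hh : AEMeasurable h ν) :
    (∫⁻ a, h a ∂ν) ^ p ≤ ν univ ^ (p - 1) * ∫⁻ a, h a ^ p ∂ν := by
  have hp₀ : 0 < p := one_pos.trans_le hp
  have hHölder := eLpNorm'_le_eLpNorm'_mul_rpow_measure_univ one_pos hp hh.aestronglyMeasurable
  simp only [eLpNorm'_eq_lintegral_enorm, enorm_eq_self, ENNReal.rpow_one, div_one] at hHölder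
  calc (∫⁻ a, h a ∂ν) ^ p
      ≤ ((∫⁻ a, h a ^ p ∂ν) ^ (1 / p) * ν univ ^ (1 - 1 / p)) ^ p := by gcongr
    _ = ν univ ^ (p - 1) * ∫⁻ a, h a ^ p ∂ν := by
      rw [ENNReal.mul_rpow_of_nonneg _ _ hp₀.le, ← ENNReal.rpow_mul, ← ENNReal.rpow_mul,
        one_div_mul_cancel hp₀.ne', sub_mul, one_div_mul_cancel hp₀.ne', one_mul,
        ENNReal.rpow_one, mul_comm]

lemma eLpNorm_lintegral_translate_le {G : Type*} [AddGroup G] [MeasurableSpace G]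
    [MeasurableAdd₂ G] {μ : Measure G} [SFinite μ] [μ.IsAddRightInvariant] {ν : Measure α}
    [SFinite ν] {p : ℝ≥0∞} (hp : 1 ≤ p) (hp_top : p ≠ ∞) {h : G → ℝ≥0∞} (hh : Measurable h)
    {τ : α → G} (hτ : Measurable τ) :
    eLpNorm (fun x ↦ ∫⁻ a, h (x + τ a) ∂ν) p μ ≤ ν univ * eLpNorm h p μ := by
  have hp₀ : p ≠ 0 := (zero_lt_one.trans_le hp).ne'
  have hq : 1 ≤ p.toReal := by simpa using ENNReal.toReal_mono hp_top hp
  simp only [eLpNorm_eq_eLpNorm' hp₀ hp_top, eLpNorm'_eq_lintegral_enorm, enorm_eq_self]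
  generalize p.toReal = q at hq
  have hq₀ : 0 < q := one_pos.trans_le hq
  rw [one_div, ENNReal.rpow_inv_le_iff hq₀, ENNReal.mul_rpow_of_nonneg _ _ hq₀.le,
    ENNReal.rpow_inv_rpow hq₀.ne']
  calc ∫⁻ x, (∫⁻ a, h (x + τ a) ∂ν) ^ q ∂μ
      ≤ ∫⁻ x, ν univ ^ (q - 1) * ∫⁻ a, h (x + τ a) ^ q ∂ν ∂μ :=
        lintegral_mono fun x ↦ lintegral_rpow_le_measure_univ_rpow_mul hq (by fun_prop)
    _ = ν univ ^ (q - 1) * ∫⁻ a, ∫⁻ x, h (x + τ a) ^ q ∂μ ∂ν := by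
        rw [lintegral_const_mul _ (Measurable.lintegral_prod_right (by fun_prop)),
          lintegral_lintegral_swap (by fun_prop)]
    _ = ν univ ^ q * ∫⁻ x, h x ^ q ∂μ := by
        have hpow : ν univ ^ (q - 1) * ν univ = ν univ ^ q := by
          simpa using (ENNReal.rpow_add_of_nonneg (x := ν univ) _ _ (sub_nonneg.2 hq)
            zero_le_one).symm
        simp_rw [lintegral_add_right_eq_self fun x ↦ h x ^ q]
        rw [lintegral_const, mul_left_comm, hpow, mul_comm]

lemma hasFDerivAt_setIntegral_of_continuous {𝕜 E F : Type*} [RCLike 𝕜] [NormedAddCommGroup E]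
    [NormedSpace 𝕜 E] [NormedAddCommGroup F] [NormedSpace ℝ F] [NormedSpace 𝕜 F]
    [TopologicalSpace α] [OpensMeasurableSpace α] {μ : Measure α} [IsFiniteMeasureOnCompacts μ]
    {K : Set α} (hK : IsCompact K) (hKm : MeasurableSet K) {f : E → α → F} {f' : E → α → E →L[𝕜] F}
    (hf : ∀ x, Continuous (f x)) (hf' : Continuous (Function.uncurry f'))
    (hd : ∀ x a, HasFDerivAt (f · a) (f' x a) x) (x : E) :
    HasFDerivAt (fun x ↦ ∫ a in K, f x a ∂μ) (∫ a in K, f' x a ∂μ) x := by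
  have hf'x : Continuous (f' x) := hf'.uncurry_left x
  obtain ⟨B, hB⟩ := hK.exists_bound_of_continuousOn hf'x.continuousOn
  have hbound : ∀ᶠ y in 𝓝 x, ∀ a ∈ K, ‖f' y a‖ < B + 1 :=
    hK.eventually_forall_of_forall_eventually fun a ha ↦
      hf'.norm.continuousAt.eventually_lt_const ((hB a ha).trans_lt (lt_add_one B))
  exact hasFDerivAt_integral_of_dominated_of_fderiv_le (bound := fun _ ↦ B + 1) hbound
    (.of_forall fun y ↦ (hf y).continuousOn.aestronglyMeasurable_of_isCompact hK hKm)
    ((hf x).continuousOn.integrableOn_compact' hK hKm)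
    (hf'x.continuousOn.aestronglyMeasurable_of_isCompact hK hKm)
    ((ae_restrict_mem hKm).mono fun a ha y hy ↦ (hy a ha).le)
    (continuousOn_const.integrableOn_compact' hK hKm) (.of_forall fun a y _ ↦ hd y a)

lemma lpNorm_le_of_forall_norm_le {F : Type*} [NormedAddCommGroup F] {μ : Measure α}
    [IsFiniteMeasure μ] {p : ℝ≥0∞} {u : α → F} (hu : AEStronglyMeasurable u μ) {C : ℝ} (hC₀ : 0 ≤ C)
    (hC : ∀ x, ‖u x‖ ≤ C) : lpNorm u p μ ≤ μ.real univ ^ p.toReal⁻¹ * C := by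
  have hfin : μ univ ^ p.toReal⁻¹ * ENNReal.ofReal C ≠ ∞ :=
    ENNReal.mul_ne_top (ENNReal.rpow_ne_top_of_nonneg (by positivity) (measure_ne_top μ univ))
      ENNReal.ofReal_ne_top
  rw [← toReal_eLpNorm hu]
  refine (ENNReal.toReal_mono hfin (eLpNorm_le_of_ae_bound (.of_forall hC))).trans_eq ?_
  rw [ENNReal.toReal_mul, ENNReal.toReal_ofReal hC₀, ← ENNReal.toReal_rpow, measureReal_def]

lemma lpNorm_two_eq_integral_sq {F : Type*} [NormedAddCommGroup F] {μ : Measure α} {u : α → F}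
    (hu : AEStronglyMeasurable u μ) : lpNorm u 2 μ = (∫ x, ‖u x‖ ^ 2 ∂μ) ^ ((1 : ℝ) / 2) := by
  simp [lpNorm_eq_integral_norm_rpow_toReal two_ne_zero ENNReal.ofNat_ne_top hu]

end Integration

section TruncatedTransform

variable {E F : Type*} [NormedAddCommGroup E] [NormedSpace ℝ E] [NormedAddCommGroup F]
  [NormedSpace ℝ F]

/-- The X-ray transform truncated to the segment `{x + sθ : |s| ≤ L}`; it is vector-valued so that
it applies to the derivative of a function as well. -/
noncomputable def truncXray (L : ℝ) (g : E → F) (x θ : E) : F :=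
  ∫ s in Icc (-L) L, g (x + s • θ)

/-- The single pixel transform built from the truncated X-ray transform, for an arbitrary measure
`σ` on the unit sphere. -/
noncomputable def truncSinglePixel [MeasurableSpace E] (σ : Measure (sphere (0 : E) 1)) (L : ℝ)
    (f : E → ℝ) (x : E) : ℝ :=
  ∫ θ : sphere (0 : E) 1, Real.exp (-truncXray L f x θ) ∂σ

variable {L M : ℝ} {f : E → ℝ}

lemma norm_truncXray_le (hL : 0 ≤ L) {g : E → F} (hg : ∀ y, ‖g y‖ ≤ M) (x θ : E) :
    ‖truncXray L g x θ‖ ≤ 2 * L * M := by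
  refine (norm_setIntegral_le_of_norm_le_const measure_Icc_lt_top fun s _ ↦ hg _).trans_eq ?_
  rw [Real.volume_real_Icc_of_le (by linarith)]
  ring

lemma exp_neg_truncXray_le (hL : 0 ≤ L) (hf : ∀ y, ‖f y‖ ≤ M) (x θ : E) :
    Real.exp (-truncXray L f x θ) ≤ Real.exp (2 * L * M) :=
  Real.exp_le_exp.2 <| (neg_le_abs _).trans (norm_truncXray_le hL hf x θ)

lemma norm_truncSinglePixel_le [MeasurableSpace E] {σ : Measure (sphere (0 : E) 1)}
    [IsFiniteMeasure σ] (hL : 0 ≤ L) (hf : ∀ y, ‖f y‖ ≤ M) (x : E) :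
    ‖truncSinglePixel σ L f x‖ ≤ σ.real univ * Real.exp (2 * L * M) := by
  refine (norm_integral_le_of_norm_le_const (.of_forall fun θ ↦ ?_)).trans_eq (mul_comm _ _)
  rw [Real.norm_eq_abs, Real.abs_exp]
  exact exp_neg_truncXray_le hL hf x θ

lemma hasFDerivAt_truncXray (hf : ContDiff ℝ 1 f) (x θ : E) :
    HasFDerivAt (truncXray L f · θ) (truncXray L (fderiv ℝ f) x θ) x := by
  have hf_cont := hf.continuous
  have := hf.continuous_fderiv one_ne_zero
  exact hasFDerivAt_setIntegral_of_continuous isCompact_Icc measurableSet_Icc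
    (f := fun y s ↦ f (y + s • θ)) (f' := fun y s ↦ fderiv ℝ f (y + s • θ))
    (fun y ↦ by fun_prop) (by unfold Function.uncurry; fun_prop)
    (fun y s ↦ (hasFDerivAt_comp_add_right _).2 (hf.differentiable one_ne_zero _).hasFDerivAt) x

variable [FiniteDimensional ℝ E]

lemma continuous_truncXray {g : E → F} (hg : Continuous g) :
    Continuous (Function.uncurry (truncXray L g)) :=
  have : ProperSpace E := FiniteDimensional.proper_real E
  continuous_parametric_integral_of_continuous
    (f := fun (z : E × E) (s : ℝ) ↦ g (z.1 + s • z.2)) (by unfold Function.uncurry; fun_prop)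
    isCompact_Icc

variable [MeasurableSpace E] [BorelSpace E] {σ : Measure (sphere (0 : E) 1)} [IsFiniteMeasure σ]

lemma hasFDerivAt_truncSinglePixel (hf : ContDiff ℝ 1 f) (x : E) :
    HasFDerivAt (truncSinglePixel σ L f)
      (∫ θ : sphere (0 : E) 1,
        Real.exp (-truncXray L f x θ) • -truncXray L (fderiv ℝ f) x θ ∂σ) x := by
  have : ProperSpace E := FiniteDimensional.proper_real E
  have hX : Continuous (Function.uncurry (truncXray L f)) := continuous_truncXray hf.continuous
  have hX' : Continuous (Function.uncurry (truncXray L (fderiv ℝ f))) :=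
    continuous_truncXray (hf.continuous_fderiv one_ne_zero)
  have hderiv := hasFDerivAt_setIntegral_of_continuous (μ := σ) isCompact_univ .univ
    (f := fun x (θ : sphere (0 : E) 1) ↦ Real.exp (-truncXray L f x θ))
    (f' := fun x θ ↦ Real.exp (-truncXray L f x θ) • -truncXray L (fderiv ℝ f) x θ)
    (fun y ↦ by fun_prop) (by unfold Function.uncurry; fun_prop)
    (fun y θ ↦ (hasFDerivAt_truncXray hf y θ).neg.exp) x
  simpa only [setIntegral_univ] using! hderiv

lemma enorm_fderiv_truncSinglePixel_le (hL : 0 ≤ L) (hf : ContDiff ℝ 1 f) (hM : ∀ y, ‖f y‖ ≤ M)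
    (x : E) :
    ‖fderiv ℝ (truncSinglePixel σ L f) x‖ₑ ≤ ENNReal.ofReal (Real.exp (2 * L * M)) *
      ∫⁻ z : sphere (0 : E) 1 × ℝ, ‖fderiv ℝ f (x + z.2 • (z.1 : E))‖ₑ
        ∂(σ.prod (volume.restrict (Icc (-L) L))) := by
  have := hf.continuous_fderiv one_ne_zero
  rw [(hasFDerivAt_truncSinglePixel hf x).fderiv,
    lintegral_prod _ (by fun_prop), ← lintegral_const_mul' _ _ ENNReal.ofReal_ne_top]
  refine (enorm_integral_le_lintegral_enorm _).trans (lintegral_mono fun θ ↦ ?_)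
  rw [enorm_smul, enorm_neg, Real.enorm_of_nonneg (Real.exp_pos _).le]
  exact mul_le_mul' (ENNReal.ofReal_le_ofReal (exp_neg_truncXray_le hL hM x θ))
    (enorm_integral_le_lintegral_enorm _)

lemma eLpNorm_fderiv_truncSinglePixel_le {μ : Measure E} [SFinite μ] [μ.IsAddRightInvariant]
    {p : ℝ≥0∞} (hp : 1 ≤ p) (hp_top : p ≠ ∞) (hL : 0 ≤ L) (hf : ContDiff ℝ 1 f)
    (hM : ∀ y, ‖f y‖ ≤ M) :
    eLpNorm (fderiv ℝ (truncSinglePixel σ L f)) p μ ≤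
      ENNReal.ofReal (Real.exp (2 * L * M) * (σ.real univ * (2 * L))) *
        eLpNorm (fderiv ℝ f) p μ := by
  set ν := σ.prod (volume.restrict (Icc (-L) L))
  have hν : ν univ = ENNReal.ofReal (σ.real univ * (2 * L)) := by
    rw [ENNReal.ofReal_mul measureReal_nonneg, ofReal_measureReal, ← univ_prod_univ,
      Measure.prod_prod, Measure.restrict_apply_univ, Real.volume_Icc]
    ring_nf
  have hh : Measurable fun y ↦ ‖fderiv ℝ f y‖ₑ :=
    (hf.continuous_fderiv one_ne_zero).enorm.measurable
  have hτ : Measurable fun z : sphere (0 : E) 1 × ℝ ↦ z.2 • (z.1 : E) := by fun_prop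
  calc eLpNorm (fderiv ℝ (truncSinglePixel σ L f)) p μ
      ≤ ENNReal.ofReal (Real.exp (2 * L * M)) *
          eLpNorm (fun x ↦ ∫⁻ z, ‖fderiv ℝ f (x + z.2 • (z.1 : E))‖ₑ ∂ν) p μ :=
        eLpNorm_le_mul_eLpNorm_of_ae_le_mul'
          (.of_forall (enorm_fderiv_truncSinglePixel_le hL hf hM)) p
    _ ≤ ENNReal.ofReal (Real.exp (2 * L * M)) * (ν univ * eLpNorm (fderiv ℝ f) p μ) := by
        gcongr
        exact (eLpNorm_lintegral_translate_le hp hp_top hh hτ).trans_eq (by rw [eLpNorm_enorm])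
    _ = _ := by rw [hν, ← mul_assoc, ← ENNReal.ofReal_mul (Real.exp_pos _).le]

end TruncatedTransform

section Euclidean

instance (n : ℕ) : IsFiniteMeasure (sphereMeasure n) :=
  inferInstanceAs (IsFiniteMeasure (volume : Measure (Euc n)).toSphere)

variable {n : ℕ} {f : Euc n → ℝ} {L M R : ℝ} {U V : Set (Euc n)}

lemma Xray_eq_truncXray (hf : Function.support f ⊆ ball 0 R) {x θ : Euc n}
    (hx : x ∈ ball (0 : Euc n) R) (hθ : ‖θ‖ = 1) : Xray f x θ = truncXray (2 * R) f x θ := by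
  refine (setIntegral_eq_integral_of_forall_compl_eq_zero fun s hs ↦ ?_).symm
  by_contra hne
  have hxs : ‖x + s • θ‖ < R := mem_ball_zero_iff.1 (hf hne)
  have hxR : ‖x‖ < R := mem_ball_zero_iff.1 hx
  have hsub : ‖s • θ‖ ≤ ‖x + s • θ‖ + ‖x‖ := by simpa using norm_sub_le (x + s • θ) x
  rw [norm_smul, hθ, mul_one, Real.norm_eq_abs] at hsub
  exact hs (abs_le.1 (by linarith))

lemma eqOn_singlePixel_truncSinglePixel (hf : Function.support f ⊆ ball 0 R) :
    EqOn (singlePixel f) (truncSinglePixel (sphereMeasure n) (2 * R) f) (ball 0 R) :=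
  fun x hx ↦ integral_congr_ae <| .of_forall fun θ ↦ by
    simp only [Xray_eq_truncXray hf hx (norm_eq_of_mem_sphere θ)]

lemma H1norm_congr_of_eqOn_isOpen {u v : Euc n → ℝ} (hV : IsOpen V) (hUV : U ⊆ V)
    (huv : EqOn u v V) : H1norm U u = H1norm U v := by
  have hae {P : Euc n → Prop} (hP : ∀ x ∈ V, P x) : ∀ᵐ x ∂volume.restrict U, P x :=
    ae_restrict_of_ae_restrict_of_subset hUV (ae_restrict_of_forall_mem hV.measurableSet hP)
  unfold H1norm
  congr 2 <;> refine integral_congr_ae (hae fun x hx ↦ ?_)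
  · simp only [huv hx]
  · simp only [(huv.eventuallyEq_of_mem (hV.mem_nhds hx)).fderiv_eq]

lemma H1norm_eq_lpNorm_add_lpNorm {u : Euc n → ℝ}
    (hu : AEStronglyMeasurable u (volume.restrict U)) :
    H1norm U u = lpNorm u 2 (volume.restrict U) + lpNorm (fderiv ℝ u) 2 (volume.restrict U) := by
  rw [lpNorm_two_eq_integral_sq hu,
    lpNorm_two_eq_integral_sq (measurable_fderiv ℝ u).aestronglyMeasurable]
  simp only [H1norm, Real.norm_eq_abs, sq_abs]

lemma H1norm_truncSinglePixel_le (hL : 0 ≤ L) (hf : ContDiff ℝ 1 f) (hfc : HasCompactSupport f)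
    (hM : ∀ y, ‖f y‖ ≤ M) (hU : Bornology.IsBounded U) :
    H1norm U (truncSinglePixel (sphereMeasure n) L f) ≤
      Real.exp (2 * L * M) * ((sphereMeasure n).real univ *
        (volume.real U ^ (2 : ℝ)⁻¹ + 2 * L * lpNorm (fderiv ℝ f) 2 volume)) := by
  set T := truncSinglePixel (sphereMeasure n) L f
  set S := (sphereMeasure n).real univ
  have : IsFiniteMeasure (volume.restrict U) := ⟨by simpa using hU.measure_lt_top⟩
  have hT : AEStronglyMeasurable T (volume.restrict U) :=
    (continuous_iff_continuousAt.2 fun x ↦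
      (hasFDerivAt_truncSinglePixel hf x).continuousAt).aestronglyMeasurable
  have hf' : MemLp (fderiv ℝ f) 2 volume :=
    (hf.continuous_fderiv one_ne_zero).memLp_of_hasCompactSupport (hfc.fderiv ℝ)
  have hT_le : lpNorm T 2 (volume.restrict U) ≤
      volume.real U ^ (2 : ℝ)⁻¹ * (S * Real.exp (2 * L * M)) := by
    simpa using lpNorm_le_of_forall_norm_le (p := 2) hT (by positivity)
      (norm_truncSinglePixel_le hL hM)
  have hT'_le : lpNorm (fderiv ℝ T) 2 (volume.restrict U) ≤
      Real.exp (2 * L * M) * (S * (2 * L)) * lpNorm (fderiv ℝ f) 2 volume := by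
    rw [← toReal_eLpNorm (measurable_fderiv ℝ T).aestronglyMeasurable, ← toReal_eLpNorm hf'.1,
      ← ENNReal.toReal_ofReal (by positivity : 0 ≤ Real.exp (2 * L * M) * (S * (2 * L))),
      ← ENNReal.toReal_mul]
    exact ENNReal.toReal_mono (ENNReal.mul_ne_top ENNReal.ofReal_ne_top hf'.eLpNorm_ne_top)
      ((eLpNorm_mono_measure _ Measure.restrict_le_self).trans
        (eLpNorm_fderiv_truncSinglePixel_le one_le_two ENNReal.ofNat_ne_top hL hf hM))
  rw [H1norm_eq_lpNorm_add_lpNorm hT]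
  linarith

lemma H1norm_singlePixel_le (hR : 0 ≤ R) (hf : ContDiff ℝ 1 f)
    (hfs : Function.support f ⊆ ball 0 R) (hM : ∀ y, ‖f y‖ ≤ M) (hU : U ⊆ ball 0 R) :
    H1norm U (singlePixel f) ≤
      Real.exp (4 * R * M) * ((sphereMeasure n).real univ *
        (volume.real U ^ (2 : ℝ)⁻¹ + 4 * R * lpNorm (fderiv ℝ f) 2 volume)) := by
  have hfc : HasCompactSupport f := .of_support_subset_isCompact
    (isCompact_closedBall 0 R) (hfs.trans ball_subset_closedBall)
  rw [H1norm_congr_of_eqOn_isOpen isOpen_ball hU (eqOn_singlePixel_truncSinglePixel hfs)]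
  convert! H1norm_truncSinglePixel_le (mul_nonneg zero_le_two hR) hf hfc hM
    (isBounded_ball.subset hU) using 3 <;> ring_nf

theorem singlePixel_mapping_property_general (n : ℕ) {Ω U : Set (Euc n)}
    (hΩ : Bornology.IsBounded Ω) (hU : Bornology.IsBounded U) :
    ∃ C > 0, ∀ f : Euc n → ℝ, ContDiff ℝ 1 f → Function.support f ⊆ Ω →
      H1norm U (singlePixel f) ≤
        C * Real.exp (C * ⨆ x : Euc n, |f x|) * (1 + H1norm univ f) := by
  obtain ⟨R, hR, hΩU⟩ := (hΩ.union hU).subset_ball_lt 0 0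
  obtain ⟨hΩR, hUR⟩ := union_subset_iff.1 hΩU
  set S := (sphereMeasure n).real univ
  set A := volume.real U ^ (2 : ℝ)⁻¹
  refine ⟨4 * R + S * (A + 4 * R), by positivity, fun f hf hfs ↦ ?_⟩
  set C := 4 * R + S * (A + 4 * R)
  have hM (y : Euc n) : ‖f y‖ ≤ ⨆ x, |f x| := by
    obtain ⟨B, hB⟩ := (HasCompactSupport.of_support_subset_isCompact hΩ.isCompact_closure
      (hfs.trans subset_closure)).exists_bound_of_continuous hf.continuous
    exact le_ciSup (f := fun x ↦ |f x|) ⟨B, forall_mem_range.2 hB⟩ y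
  set M := ⨆ x, |f x|
  have hM₀ : 0 ≤ M := (norm_nonneg _).trans (hM 0)
  set G := lpNorm (fderiv ℝ f) 2 volume
  have hG₀ : 0 ≤ G := lpNorm_nonneg
  have hG : G ≤ H1norm univ f := by
    rw [H1norm_eq_lpNorm_add_lpNorm hf.continuous.aestronglyMeasurable, Measure.restrict_univ]
    exact le_add_of_nonneg_left lpNorm_nonneg
  calc H1norm U (singlePixel f)
      ≤ Real.exp (4 * R * M) * (S * (A + 4 * R * G)) :=
        H1norm_singlePixel_le hR.le hf (hfs.trans hΩR) hM hUR
    _ ≤ Real.exp (4 * R * M) * (S * (A + 4 * R) * (1 + G)) := by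
        refine mul_le_mul_of_nonneg_left ?_ (Real.exp_pos _).le
        linarith [show 0 ≤ S * (A * G + 4 * R) by positivity]
    _ ≤ Real.exp (C * M) * (C * (1 + H1norm univ f)) := by
        gcongr <;> simp only [C, le_add_iff_nonneg_left, le_add_iff_nonneg_right] <;> positivity
    _ = C * Real.exp (C * M) * (1 + H1norm univ f) := by ring

end Euclidean

/-- For `n ≥ 3` and open bounded `Ω, Ω₁` with `closure Ω ⊂ Ω₁`, there is `C > 0`
such that for every `C¹` function `f` supported in `closure Ω`,
`‖Kf‖_{H¹(Ω₁)} ≤ C e^{C‖f‖_{C⁰}} (1 + ‖f‖_{H¹(ℝⁿ)})`. -/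
theorem singlePixel_mapping_property (n : ℕ) (hn : 3 ≤ n) (Ω Ω₁ : Set (Euc n))
    (hΩo : IsOpen Ω) (hΩb : Bornology.IsBounded Ω)
    (hΩ₁o : IsOpen Ω₁) (hΩ₁b : Bornology.IsBounded Ω₁) (hΩΩ₁ : closure Ω ⊆ Ω₁) :
    ∃ C > 0, ∀ f : Euc n → ℝ, ContDiff ℝ 1 f → Function.support f ⊆ closure Ω →
      H1norm Ω₁ (singlePixel f) ≤
        C * Real.exp (C * ⨆ x : Euc n, |f x|) *
          (1 + ((∫ x : Euc n, f x ^ 2) ^ ((1 : ℝ) / 2) +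
            (∫ x : Euc n, ‖fderiv ℝ f x‖ ^ 2) ^ ((1 : ℝ) / 2))) := by
  obtain ⟨C, hC, hbound⟩ := singlePixel_mapping_property_general n hΩb.closure hΩ₁b
  exact ⟨C, hC, by simpa only [H1norm, setIntegral_univ] using hbound⟩
end

section
/- Let n ≥ 2, let Ω ⊂ ℝⁿ be an open bounded set contained in the closed ball of radius R centered at the origin, and let f₁, f₂ : ℝⁿ → ℝ be continuous, supported in the closure of Ω, with |f_j(x)| ≤ M for all x and j = 1,2. Then for every x ∈ ℝⁿ, |Kf₁(x) − Kf₂(x)| ≤ |X'X(f₁ − f₂)(x)| + (e^{2RM} − 1) · ( X'X|f₁ − f₂| )(x). -/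
open MeasureTheory Metric Real

/-!
Write `a = Xf₁(x, θ)` and `b = Xf₂(x, θ)`. Unit speed parametrization of a line is isometric, so the
line meets a set of diameter `d` in a set of parameters of measure at most `d`; hence
`|a|, |b| ≤ L = d * M`. As `t ↦ exp t - t` is Lipschitz on `[-L, L]` with constant `exp L - 1`,
replacing `exp (-a) - exp (-b)` by its linearization `b - a` costs at most
`(exp L - 1) * |a - b|`. Integrating over `θ`, the linear part gives `X'X(f₁ - f₂)`, and
`|a - b| ≤ X|f₁ - f₂|` controls the error. A ball of radius `R` has diameter at most `2R`.
-/

lemma abs_exp_sub_one_le_exp_sub_one {t L : ℝ} (ht : |t| ≤ L) : |exp t - 1| ≤ exp L - 1 := by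
  have hupper : exp t ≤ exp L := exp_le_exp.2 (le_of_abs_le ht)
  rw [abs_le]
  constructor <;> linarith [add_one_le_exp t, add_one_le_exp L, neg_le_of_abs_le ht]

lemma abs_exp_sub_exp_sub_sub_le {a b L : ℝ} (ha : |a| ≤ L) (hb : |b| ≤ L) :
    |exp a - exp b - (a - b)| ≤ (exp L - 1) * |a - b| := by
  have hderiv (t : ℝ) : HasDerivAt (fun t => exp t - t) (exp t - 1) t :=
    (hasDerivAt_exp t).sub (hasDerivAt_id t)
  have hmvt := (convex_Icc (-L) L).norm_image_sub_le_of_norm_hasDerivWithin_le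
    (fun t _ => (hderiv t).hasDerivWithinAt)
    (fun t ht => abs_exp_sub_one_le_exp_sub_one (abs_le.2 ht)) (abs_le.1 hb) (abs_le.1 ha)
  rwa [norm_eq_abs, norm_eq_abs, sub_sub_sub_comm] at hmvt

section IntegralExp

variable {α : Type*} [MeasurableSpace α] {μ : Measure α} [IsFiniteMeasure μ] {u v : α → ℝ} {L : ℝ}

lemma integrable_exp_of_abs_le (hu : AEStronglyMeasurable u μ) (huL : ∀ᵐ t ∂μ, |u t| ≤ L) :
    Integrable (fun t => exp (u t)) μ := by
  refine .of_bound (continuous_exp.comp_aestronglyMeasurable hu) (exp L) ?_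
  filter_upwards [huL] with t ht
  rw [norm_eq_abs, abs_exp]
  exact exp_le_exp.2 (le_of_abs_le ht)

lemma abs_integral_exp_sub_integral_exp_le (hu : AEStronglyMeasurable u μ)
    (hv : AEStronglyMeasurable v μ) (huL : ∀ᵐ t ∂μ, |u t| ≤ L) (hvL : ∀ᵐ t ∂μ, |v t| ≤ L) :
    |∫ t, exp (u t) ∂μ - ∫ t, exp (v t) ∂μ| ≤
      |∫ t, (u t - v t) ∂μ| + (exp L - 1) * ∫ t, |u t - v t| ∂μ := by
  have hexpu := integrable_exp_of_abs_le hu huL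
  have hexpv := integrable_exp_of_abs_le hv hvL
  have hsub : Integrable (fun t => u t - v t) μ :=
    (Integrable.of_bound hu L huL).sub (.of_bound hv L hvL)
  have hremainder : |∫ t, (exp (u t) - exp (v t) - (u t - v t)) ∂μ| ≤
      ∫ t, (exp L - 1) * |u t - v t| ∂μ := by
    rw [← norm_eq_abs]
    refine norm_integral_le_of_norm_le (hsub.abs.const_mul _) ?_
    filter_upwards [huL, hvL] with t hut hvt using abs_exp_sub_exp_sub_sub_le hut hvt
  rw [integral_sub (by exact hexpu.sub hexpv) hsub, integral_sub hexpu hexpv,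
    integral_const_mul] at hremainder
  linarith [abs_sub_abs_le_abs_sub (∫ t, exp (u t) ∂μ - ∫ t, exp (v t) ∂μ)
    (∫ t, (u t - v t) ∂μ)]

end IntegralExp

section Line

variable {E : Type*} [NormedAddCommGroup E] [NormedSpace ℝ E] {θ : E}

lemma isometry_add_smul (x : E) (hθ : ‖θ‖ = 1) : Isometry fun s : ℝ => x + s • θ :=
  .of_dist_eq fun s t => by
    rw [dist_add_left, dist_eq_norm, ← sub_smul, norm_smul, hθ, mul_one, dist_eq_norm]

lemma volume_preimage_add_smul_le (x : E) (hθ : ‖θ‖ = 1) (K : Set E) :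
    volume ((fun s : ℝ => x + s • θ) ⁻¹' K) ≤ ediam K :=
  (volume_le_diam _).trans <| by
    simpa only [ENNReal.coe_one, one_mul] using
      (isometry_add_smul x hθ).antilipschitz.ediam_preimage_le K

lemma volume_preimage_add_smul_lt_top (x : E) (hθ : ‖θ‖ = 1) {K : Set E}
    (hK : Bornology.IsBounded K) : volume ((fun s : ℝ => x + s • θ) ⁻¹' K) < ⊤ :=
  (volume_preimage_add_smul_le x hθ K).trans_lt hK.ediam_ne_top.lt_top

lemma volume_real_preimage_add_smul_le (x : E) (hθ : ‖θ‖ = 1) {K : Set E}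
    (hK : Bornology.IsBounded K) :
    volume.real ((fun s : ℝ => x + s • θ) ⁻¹' K) ≤ diam K :=
  ENNReal.toReal_mono hK.ediam_ne_top (volume_preimage_add_smul_le x hθ K)

lemma integrable_comp_add_smul [MeasurableSpace E] [BorelSpace E] {f : E → ℝ} {K : Set E} {M : ℝ}
    (hf : Measurable f) (hK : Bornology.IsBounded K) (hs : Function.support f ⊆ K)
    (hM : ∀ y, |f y| ≤ M) (x : E) (hθ : ‖θ‖ = 1) : Integrable fun s : ℝ => f (x + s • θ) := by
  have hline := (isometry_add_smul x hθ).continuous.measurable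
  refine (integrableOn_iff_integrable_of_support_subset (Set.preimage_mono hs)).1 ?_
  exact Measure.integrableOn_of_bounded (volume_preimage_add_smul_lt_top x hθ hK).ne
    (hf.comp hline).aestronglyMeasurable (.of_forall fun s => hM (x + s • θ))

end Line

section Xray

variable {n : ℕ} {K : Set (Euc n)} {M : ℝ} {f : Euc n → ℝ}

lemma abs_Xray_le (hK : Bornology.IsBounded K) (hs : Function.support f ⊆ K)
    (hM : ∀ y, |f y| ≤ M) (x : Euc n) {θ : Euc n} (hθ : ‖θ‖ = 1) :
    |Xray f x θ| ≤ diam K * M := by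
  have hM0 : 0 ≤ M := (abs_nonneg _).trans (hM 0)
  have hzero : ∀ s ∉ (fun s : ℝ => x + s • θ) ⁻¹' K, f (x + s • θ) = 0 := fun s hsK =>
    Function.notMem_support.1 fun h => hsK (hs h)
  calc |Xray f x θ| = |∫ s in (fun s : ℝ => x + s • θ) ⁻¹' K, f (x + s • θ)| := by
        rw [Xray, setIntegral_eq_integral_of_forall_compl_eq_zero hzero]
    _ ≤ M * volume.real ((fun s : ℝ => x + s • θ) ⁻¹' K) :=
        norm_setIntegral_le_of_norm_le_const (f := fun s : ℝ => f (x + s • θ))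
          (volume_preimage_add_smul_lt_top x hθ hK) fun s _ => hM (x + s • θ)
    _ ≤ M * diam K := by gcongr; exact volume_real_preimage_add_smul_le x hθ hK
    _ = diam K * M := mul_comm _ _

lemma Xray_sub {g : Euc n → ℝ} {x θ : Euc n} (hf : Integrable fun s : ℝ => f (x + s • θ))
    (hg : Integrable fun s : ℝ => g (x + s • θ)) :
    Xray (fun y => f y - g y) x θ = Xray f x θ - Xray g x θ :=
  integral_sub hf hg

lemma stronglyMeasurable_Xray (hf : Measurable f) (x : Euc n) :
    StronglyMeasurable fun θ : sphere (0 : Euc n) 1 => Xray f x θ := by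
  have hline : Continuous fun p : sphere (0 : Euc n) 1 × ℝ => x + p.2 • (p.1 : Euc n) := by
    fun_prop
  exact (hf.comp hline.measurable).stronglyMeasurable.integral_prod_right'

lemma integrable_Xray (hf : Measurable f) (hK : Bornology.IsBounded K)
    (hs : Function.support f ⊆ K) (hM : ∀ y, |f y| ≤ M) (x : Euc n) :
    Integrable (fun θ : sphere (0 : Euc n) 1 => Xray f x θ) (sphereMeasure n) :=
  .of_bound (stronglyMeasurable_Xray hf x).aestronglyMeasurable (diam K * M) <|
    .of_forall fun θ => abs_Xray_le hK hs hM x (norm_eq_of_mem_sphere θ)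

lemma integral_abs_Xray_le_normalOp_abs (hf : Measurable f) (hK : Bornology.IsBounded K)
    (hs : Function.support f ⊆ K) (hM : ∀ y, |f y| ≤ M) (x : Euc n) :
    ∫ θ : sphere (0 : Euc n) 1, |Xray f x θ| ∂(sphereMeasure n) ≤
      normalOp (fun y => |f y|) x := by
  have hs' : Function.support (fun y => |f y|) ⊆ K := fun y hy => hs (abs_ne_zero.1 hy)
  have hM' (y : Euc n) : |(|f y|)| ≤ M := (abs_abs _).trans_le (hM y)
  exact integral_mono (integrable_Xray hf hK hs hM x).abs
    (integrable_Xray hf.abs hK hs' hM' x) fun θ => abs_integral_le_integral_abs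

end Xray

theorem singlePixel_difference_pointwise_general {n : ℕ} {d M : ℝ} {K : Set (Euc n)}
    (hK : Bornology.IsBounded K) (hd : diam K ≤ d) {f₁ f₂ : Euc n → ℝ} (hf₁ : Measurable f₁)
    (hf₂ : Measurable f₂) (hs₁ : Function.support f₁ ⊆ K) (hs₂ : Function.support f₂ ⊆ K)
    (hM₁ : ∀ x, |f₁ x| ≤ M) (hM₂ : ∀ x, |f₂ x| ≤ M) (x : Euc n) :
    |singlePixel f₁ x - singlePixel f₂ x| ≤
      |normalOp (fun y => f₁ y - f₂ y) x| +
        (exp (d * M) - 1) * normalOp (fun y => |f₁ y - f₂ y|) x := by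
  have hM : 0 ≤ M := (abs_nonneg _).trans (hM₁ 0)
  have hd₀ : 0 ≤ d := diam_nonneg.trans hd
  have hXsub (θ : sphere (0 : Euc n) 1) :
      Xray (fun y => f₁ y - f₂ y) x θ = Xray f₁ x θ - Xray f₂ x θ :=
    Xray_sub (integrable_comp_add_smul hf₁ hK hs₁ hM₁ x (norm_eq_of_mem_sphere θ))
      (integrable_comp_add_smul hf₂ hK hs₂ hM₂ x (norm_eq_of_mem_sphere θ))
  have hX {f : Euc n → ℝ} (hs : Function.support f ⊆ K) (hfM : ∀ y, |f y| ≤ M)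
      (θ : sphere (0 : Euc n) 1) : |-Xray f x θ| ≤ d * M := by
    rw [abs_neg]
    exact (abs_Xray_le hK hs hfM x (norm_eq_of_mem_sphere θ)).trans (by gcongr)
  have hlinearize := abs_integral_exp_sub_integral_exp_le (μ := sphereMeasure n)
    (stronglyMeasurable_Xray hf₂ x).neg.aestronglyMeasurable
    (stronglyMeasurable_Xray hf₁ x).neg.aestronglyMeasurable
    (.of_forall (hX hs₂ hM₂)) (.of_forall (hX hs₁ hM₁))
  simp only [Pi.neg_apply, neg_sub_neg, ← hXsub] at hlinearize
  have herror := integral_abs_Xray_le_normalOp_abs (hf₁.sub hf₂) hK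
    ((Function.support_sub f₁ f₂).trans (Set.union_subset hs₁ hs₂))
    (fun y => (abs_sub _ _).trans (add_le_add (hM₁ y) (hM₂ y))) x
  rw [abs_sub_comm]
  exact hlinearize.trans <| add_le_add_right
    (mul_le_mul_of_nonneg_left herror (sub_nonneg.2 (one_le_exp (by positivity)))) _

/-- For `n ≥ 2`, `Ω` open bounded contained in the closed ball of radius `R`, and
`f₁, f₂` continuous, supported in `closure Ω`, bounded by `M`, one has the pointwise bound
`|Kf₁(x) − Kf₂(x)| ≤ |X'X(f₁ − f₂)(x)| + (e^{2RM} − 1)(X'X|f₁ − f₂|)(x)`. -/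
theorem singlePixel_difference_pointwise (n : ℕ) (hn : 2 ≤ n) (R M : ℝ) (hR : 0 ≤ R)
    (Ω : Set (Euc n)) (hΩo : IsOpen Ω) (hΩb : Bornology.IsBounded Ω)
    (hΩR : Ω ⊆ Metric.closedBall 0 R)
    (f₁ f₂ : Euc n → ℝ) (hf₁ : Continuous f₁) (hf₂ : Continuous f₂)
    (hs₁ : Function.support f₁ ⊆ closure Ω) (hs₂ : Function.support f₂ ⊆ closure Ω)
    (hM₁ : ∀ x, |f₁ x| ≤ M) (hM₂ : ∀ x, |f₂ x| ≤ M) (x : Euc n) :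
    |singlePixel f₁ x - singlePixel f₂ x| ≤
      |normalOp (fun y => f₁ y - f₂ y) x| +
        (Real.exp (2 * R * M) - 1) * normalOp (fun y => |f₁ y - f₂ y|) x :=
  singlePixel_difference_pointwise_general (hΩb.closure)
    (diam_le_of_subset_closedBall hR (closure_minimal hΩR isClosed_closedBall))
    hf₁.measurable hf₂.measurable hs₁ hs₂ hM₁ hM₂ x
end
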